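/- Let R = (a, 0) × (θ₀, 2π - θ₀) with a < 0 and 0 < θ₀ < π, and suppose ψ is harmonic on R, continuous on its closure, vanishes on the two vertical sides {a} × [θ₀, 2π-θ₀] and {0} × [θ₀, 2π-θ₀], is even about θ = π (ψ(r, θ) = ψ(r, 2π - θ)), and satisfies |ψ| ≤ M on R. Then there is a constant C depending only on M such that |ψ(r, θ)| ≤ C exp(-(π/|a|)(2π - θ₀ - θ)) for all (r,θ) ∈ R with θ ≥ π. -/

import Mathlib

open Real

/-- `u` is harmonic on `s ⊆ ℝ²`: twice continuously differentiable with vanishing Laplacian. -/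
def HarmonicOn (u : ℝ × ℝ → ℝ) (s : Set (ℝ × ℝ)) : Prop :=
  ContDiffOn ℝ 2 u s ∧ ∀ p ∈ s,
    (fderiv ℝ (fun q => fderiv ℝ u q (1, 0)) p) (1, 0) +
      (fderiv ℝ (fun q => fderiv ℝ u q (0, 1)) p) (0, 1) = 0

lemma no_max_of_second_pos {g g' : ℝ → ℝ} {x g2 : ℝ}
    (h1 : ∀ᶠ s in nhds x, HasDerivAt g (g' s) s) (h2 : HasDerivAt g' g2 x)
    (hmax : IsLocalMax g x) : g2 ≤ 0 := by
  by_contra! hpos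
  have e1 : deriv g =ᶠ[nhds x] g' := by
    filter_upwards [h1] with s hs using hs.deriv
  have hd2 : deriv (deriv g) x = g2 := by rw [e1.deriv_eq]; exact h2.deriv
  have hmin : IsLocalMin g x :=
    isLocalMin_of_deriv_deriv_pos (by rw [hd2]; exact hpos) hmax.deriv_eq_zero
      h1.self_of_nhds.continuousAt
  have hconst : g =ᶠ[nhds x] fun _ => g x := by
    filter_upwards [hmin, hmax] with s hs hs' using le_antisymm hs' hs
  have h3 : deriv g =ᶠ[nhds x] fun _ => 0 := by
    have := hconst.deriv
    simpa using this
  have h4 : deriv (deriv g) x = 0 := by rw [h3.deriv_eq]; simp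
  linarith

/-- slice-wise harmonicity on an open rectangle -/
def SHarm (f : ℝ × ℝ → ℝ) (a b c d : ℝ) : Prop :=
  ∃ fx fxx fy fyy : ℝ × ℝ → ℝ, ∀ x ∈ Set.Ioo a b, ∀ y ∈ Set.Ioo c d,
    HasDerivAt (fun s => f (s, y)) (fx (x, y)) x ∧
    HasDerivAt (fun s => fx (s, y)) (fxx (x, y)) x ∧
    HasDerivAt (fun s => f (x, s)) (fy (x, y)) y ∧
    HasDerivAt (fun s => fy (x, s)) (fyy (x, y)) y ∧
    fxx (x, y) + fyy (x, y) = 0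

lemma SHarm.sub {f g : ℝ × ℝ → ℝ} {a b c d : ℝ} (hf : SHarm f a b c d) (hg : SHarm g a b c d) :
    SHarm (fun p => f p - g p) a b c d := by
  obtain ⟨f1, f2, f3, f4, hf⟩ := hf
  obtain ⟨g1, g2, g3, g4, hg⟩ := hg
  refine ⟨fun p => f1 p - g1 p, fun p => f2 p - g2 p, fun p => f3 p - g3 p,
    fun p => f4 p - g4 p, fun x hx y hy => ?_⟩
  obtain ⟨a1, a2, a3, a4, a5⟩ := hf x hx y hy
  obtain ⟨b1, b2, b3, b4, b5⟩ := hg x hx y hy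
  exact ⟨a1.sub b1, a2.sub b2, a3.sub b3, a4.sub b4, by simp only; linarith⟩

lemma SHarm.neg {f : ℝ × ℝ → ℝ} {a b c d : ℝ} (hf : SHarm f a b c d) :
    SHarm (fun p => - f p) a b c d := by
  obtain ⟨f1, f2, f3, f4, hf⟩ := hf
  refine ⟨fun p => - f1 p, fun p => - f2 p, fun p => - f3 p,
    fun p => - f4 p, fun x hx y hy => ?_⟩
  obtain ⟨a1, a2, a3, a4, a5⟩ := hf x hx y hy
  exact ⟨a1.neg, a2.neg, a3.neg, a4.neg, by simp only; linarith⟩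

lemma SHarm.mono {f : ℝ × ℝ → ℝ} {a b c d c' d' : ℝ} (hf : SHarm f a b c d)
    (hc : c ≤ c') (hd : d' ≤ d) : SHarm f a b c' d' := by
  obtain ⟨f1, f2, f3, f4, hf⟩ := hf
  exact ⟨f1, f2, f3, f4, fun x hx y hy =>
    hf x hx y ⟨lt_of_le_of_lt hc hy.1, lt_of_lt_of_le hy.2 hd⟩⟩

lemma maxp {f : ℝ × ℝ → ℝ} {a b c d : ℝ} (hf : SHarm f a b c d)
    (hcont : ContinuousOn f (Set.Icc a b ×ˢ Set.Icc c d))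
    (hbd : ∀ x ∈ Set.Icc a b, ∀ y ∈ Set.Icc c d,
      (x = a ∨ x = b ∨ y = c ∨ y = d) → f (x, y) ≤ 0) :
    ∀ x ∈ Set.Icc a b, ∀ y ∈ Set.Icc c d, f (x, y) ≤ 0 := by
  intro x hx y hy
  obtain ⟨f1, f2, f3, f4, hf⟩ := hf
  have key : ∀ ε > 0, f (x, y) ≤ ε * (b - a) ^ 2 := by
    intro ε hε
    have hK : IsCompact (Set.Icc a b ×ˢ Set.Icc c d) := isCompact_Icc.prod isCompact_Icc
    have hgc : ContinuousOn (fun p : ℝ × ℝ => f p + ε * (p.1 - a) ^ 2)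
        (Set.Icc a b ×ˢ Set.Icc c d) := hcont.add (by fun_prop)
    obtain ⟨⟨x₀, y₀⟩, hq, hm⟩ := hK.exists_isMaxOn ⟨(x, y), hx, hy⟩ hgc
    obtain ⟨hx₀, hy₀⟩ := hq
    simp only at hx₀ hy₀
    have h1 : f (x, y) + ε * (x - a) ^ 2 ≤ f (x₀, y₀) + ε * (x₀ - a) ^ 2 :=
      hm (show (x, y) ∈ _ from ⟨hx, hy⟩)
    have h2 : 0 ≤ ε * (x - a) ^ 2 := by positivity
    have h3 : ε * (x₀ - a) ^ 2 ≤ ε * (b - a) ^ 2 := by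
      have := hx₀.1
      have := hx₀.2
      gcongr
    by_cases hB : x₀ = a ∨ x₀ = b ∨ y₀ = c ∨ y₀ = d
    · have := hbd x₀ hx₀ y₀ hy₀ hB
      linarith
    · exfalso
      push Not at hB
      obtain ⟨n1, n2, n3, n4⟩ := hB
      have ix : x₀ ∈ Set.Ioo a b := ⟨lt_of_le_of_ne hx₀.1 (Ne.symm n1), lt_of_le_of_ne hx₀.2 n2⟩
      have iy : y₀ ∈ Set.Ioo c d := ⟨lt_of_le_of_ne hy₀.1 (Ne.symm n3), lt_of_le_of_ne hy₀.2 n4⟩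
      have A : f2 (x₀, y₀) + ε * 2 ≤ 0 := by
        refine no_max_of_second_pos (g := fun s => f (s, y₀) + ε * (s - a) ^ 2)
          (g' := fun s => f1 (s, y₀) + ε * (2 * (s - a))) (x := x₀) ?_ ?_ ?_
        · filter_upwards [isOpen_Ioo.mem_nhds ix] with s hs
          have := (((hasDerivAt_id s).sub_const a).pow 2).const_mul ε
          refine ((hf s hs y₀ iy).1.add this).congr_deriv ?_
          simp
        · have := (((hasDerivAt_id x₀).sub_const a).const_mul 2).const_mul ε
          refine ((hf x₀ ix y₀ iy).2.1.add this).congr_deriv ?_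
          simp
        · filter_upwards [isOpen_Ioo.mem_nhds ix] with s hs
          exact hm (show (s, y₀) ∈ _ from ⟨⟨hs.1.le, hs.2.le⟩, hy₀⟩)
      have B : f4 (x₀, y₀) ≤ 0 := by
        refine no_max_of_second_pos (g := fun s => f (x₀, s))
          (g' := fun s => f3 (x₀, s)) (x := y₀) ?_ (hf x₀ ix y₀ iy).2.2.2.1 ?_
        · filter_upwards [isOpen_Ioo.mem_nhds iy] with s hs
          exact (hf x₀ ix s hs).2.2.1
        · filter_upwards [isOpen_Ioo.mem_nhds iy] with s hs
          have : f (x₀, s) + ε * (x₀ - a) ^ 2 ≤ f (x₀, y₀) + ε * (x₀ - a) ^ 2 :=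
            hm (show (x₀, s) ∈ _ from ⟨hx₀, ⟨hs.1.le, hs.2.le⟩⟩)
          linarith
      have := (hf x₀ ix y₀ iy).2.2.2.2
      linarith
  refine le_of_forall_pos_le_add fun δ hδ => ?_
  have hD : 0 < (b - a) ^ 2 + 1 := by positivity
  have := key (δ / ((b - a) ^ 2 + 1)) (by positivity)
  have h5 : δ / ((b - a) ^ 2 + 1) * (b - a) ^ 2 ≤ δ := by
    rw [div_mul_eq_mul_div, div_le_iff₀ hD]
    nlinarith
  linarith

lemma compare {f v : ℝ × ℝ → ℝ} {a b c d : ℝ} (hf : SHarm f a b c d) (hv : SHarm v a b c d)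
    (hfc : ContinuousOn f (Set.Icc a b ×ˢ Set.Icc c d)) (hvc : Continuous v)
    (hbd : ∀ x ∈ Set.Icc a b, ∀ y ∈ Set.Icc c d,
      (x = a ∨ x = b ∨ y = c ∨ y = d) → |f (x, y)| ≤ v (x, y)) :
    ∀ x ∈ Set.Icc a b, ∀ y ∈ Set.Icc c d, |f (x, y)| ≤ v (x, y) := by
  intro x hx y hy
  have h1 := maxp (hf.sub hv) (hfc.sub hvc.continuousOn)
    (fun x hx y hy h => by have := (abs_le.1 (hbd x hx y hy h)).2; linarith) x hx y hy
  have h2 := maxp (hf.neg.sub hv) (hfc.neg.sub hvc.continuousOn)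
    (fun x hx y hy h => by have := (abs_le.1 (hbd x hx y hy h)).1; linarith) x hx y hy
  exact abs_le.2 ⟨by linarith, by linarith⟩

lemma sharm_of_harmonicOn {u : ℝ × ℝ → ℝ} {a b c d : ℝ}
    (h : HarmonicOn u (Set.Ioo a b ×ˢ Set.Ioo c d)) : SHarm u a b c d := by
  obtain ⟨hc, hl⟩ := h
  refine ⟨fun q => fderiv ℝ u q (1, 0),
    fun p => (fderiv ℝ (fun q => fderiv ℝ u q (1, 0)) p) (1, 0),
    fun q => fderiv ℝ u q (0, 1),
    fun p => (fderiv ℝ (fun q => fderiv ℝ u q (0, 1)) p) (0, 1), fun x hx y hy => ?_⟩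
  have ho : IsOpen (Set.Ioo a b ×ˢ Set.Ioo c d) := isOpen_Ioo.prod isOpen_Ioo
  have hmem : (x, y) ∈ Set.Ioo a b ×ˢ Set.Ioo c d := ⟨hx, hy⟩
  have hat : ContDiffAt ℝ 2 u (x, y) := hc.contDiffAt (ho.mem_nhds hmem)
  have hd : DifferentiableAt ℝ u (x, y) := hat.differentiableAt (by norm_num)
  have hd' : DifferentiableAt ℝ (fderiv ℝ u) (x, y) :=
    (hat.fderiv_right (m := 1) (by norm_num)).differentiableAt (by norm_num)
  have d1 : ∀ e : ℝ × ℝ, DifferentiableAt ℝ (fun q => fderiv ℝ u q e) (x, y) := fun e =>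
    hd'.clm_apply (differentiableAt_const e)
  have l1 : HasDerivAt (fun s : ℝ => (s, y)) ((1 : ℝ), (0 : ℝ)) x :=
    (hasDerivAt_id x).prodMk (hasDerivAt_const x y)
  have l2 : HasDerivAt (fun s : ℝ => (x, s)) ((0 : ℝ), (1 : ℝ)) y :=
    (hasDerivAt_const y x).prodMk (hasDerivAt_id y)
  have r1 := hd.hasFDerivAt.comp_hasDerivAt x l1
  have r2 := (d1 (1, 0)).hasFDerivAt.comp_hasDerivAt x l1
  have r3 := hd.hasFDerivAt.comp_hasDerivAt y l2
  have r4 := (d1 (0, 1)).hasFDerivAt.comp_hasDerivAt y l2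
  exact ⟨r1, r2, r3, r4, hl _ hmem⟩

lemma sharm_poly (K t e m a b c d : ℝ) :
    SHarm (fun p => K * ((p.2 - t) ^ 2 - (p.1 - e) ^ 2 + m * (p.1 - e))) a b c d := by
  refine ⟨fun p => K * (-(2 * (p.1 - e)) + m), fun _ => K * (-2), fun p => K * (2 * (p.2 - t)),
    fun _ => K * 2, fun x _ y _ => ⟨?_, ?_, ?_, ?_, by ring⟩⟩
  · have h := (hasDerivAt_id x).sub_const e
    refine ((((h.pow 2).const_sub ((y - t) ^ 2)).add (h.const_mul m)).const_mul K).congr_deriv ?_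
    simp
  · have h := (hasDerivAt_id x).sub_const e
    refine ((((h.const_mul 2).neg).add_const m).const_mul K).congr_deriv ?_
    simp
  · have h := (hasDerivAt_id y).sub_const t
    refine ((((h.pow 2).sub_const ((x - e) ^ 2)).add_const (m * (x - e))).const_mul K).congr_deriv ?_
    simp
  · have h := (hasDerivAt_id y).sub_const t
    refine ((h.const_mul 2).const_mul K).congr_deriv ?_
    simp

lemma sharm_trig (K l e t a b c d : ℝ) :
    SHarm (fun p => K * (Real.sin (l * (p.1 - e)) * Real.cosh (l * (p.2 - t)))) a b c d := by
  refine ⟨fun p => K * ((Real.cos (l * (p.1 - e)) * l) * Real.cosh (l * (p.2 - t))),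
    fun p => K * ((-Real.sin (l * (p.1 - e)) * l * l) * Real.cosh (l * (p.2 - t))),
    fun p => K * (Real.sin (l * (p.1 - e)) * (Real.sinh (l * (p.2 - t)) * l)),
    fun p => K * (Real.sin (l * (p.1 - e)) * (Real.cosh (l * (p.2 - t)) * l * l)),
    fun x _ y _ => ?_⟩
  have hx : HasDerivAt (fun s => l * (s - e)) l x := by
    simpa using ((hasDerivAt_id x).sub_const e).const_mul l
  have hy : HasDerivAt (fun s => l * (s - t)) l y := by
    simpa using ((hasDerivAt_id y).sub_const t).const_mul l
  exact ⟨(hx.sin.mul_const (Real.cosh (l * (y - t)))).const_mul K, ((hx.cos.mul_const l).mul_const (Real.cosh (l * (y - t)))).const_mul K,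
    (hy.cosh.const_mul (Real.sin (l * (x - e)))).const_mul K, ((hy.sinh.mul_const l).const_mul (Real.sin (l * (x - e)))).const_mul K, by ring⟩

/-- Barrier step: linear vanishing at the sides. -/
lemma step1 {ψ : ℝ × ℝ → ℝ} {M a t : ℝ} (hM : 0 < M) (ha : a < 0)
    (hs : SHarm ψ a 0 (t + a) (t - a))
    (hc : ContinuousOn ψ (Set.Icc a 0 ×ˢ Set.Icc (t + a) (t - a)))
    (h0 : ∀ θ ∈ Set.Icc (t + a) (t - a), ψ (a, θ) = 0 ∧ ψ (0, θ) = 0)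
    (hb : ∀ x ∈ Set.Icc a 0, ∀ y ∈ Set.Icc (t + a) (t - a), |ψ (x, y)| ≤ M) :
    ∀ x ∈ Set.Icc a 0, |ψ (x, t)| ≤ M * Real.sin (π / (-a) * (x - a)) := by
  have hane : a ≠ 0 := ha.ne
  have ha2 : 0 < a ^ 2 := by positivity
  have ht : t ∈ Set.Icc (t + a) (t - a) := ⟨by linarith, by linarith⟩
  have hMa : 0 < M / a ^ 2 := by positivity
  have hMe : M = M / a ^ 2 * a ^ 2 := by field_simp
  have A := compare hs (sharm_poly (M / a ^ 2) t a (-2 * a) a 0 (t + a) (t - a)) hc (by fun_prop)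
    (by
      intro x hx y hy h
      obtain ⟨hx1, hx2⟩ := hx
      simp only
      rcases h with h | h | h | h
      · subst h
        rw [(h0 y hy).1, abs_zero]
        have : 0 ≤ (y - t) ^ 2 - (x - x) ^ 2 + -2 * x * (x - x) := by nlinarith [sq_nonneg (y - t)]
        positivity
      · subst h
        rw [(h0 y hy).2, abs_zero]
        have : 0 ≤ (y - t) ^ 2 - (0 - a) ^ 2 + -2 * a * (0 - a) := by nlinarith [sq_nonneg (y - t)]
        positivity
      all_goals
        refine (hb x ⟨hx1, hx2⟩ y hy).trans ?_
        rw [show M ≤ _ ↔ M / a ^ 2 * a ^ 2 ≤ _ by rw [← hMe]]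
        gcongr
        subst h
        nlinarith [mul_nonneg (sub_nonneg.2 hx1) (neg_nonneg.2 hx2), mul_nonneg (sub_nonneg.2 hx1) (neg_nonneg.2 ha.le)])
  have B := compare hs (sharm_poly (M / a ^ 2) t 0 (2 * a) a 0 (t + a) (t - a)) hc (by fun_prop)
    (by
      intro x hx y hy h
      obtain ⟨hx1, hx2⟩ := hx
      simp only
      rcases h with h | h | h | h
      · subst h
        rw [(h0 y hy).1, abs_zero]
        have : 0 ≤ (y - t) ^ 2 - (x - 0) ^ 2 + 2 * x * (x - 0) := by nlinarith [sq_nonneg (y - t)]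
        positivity
      · subst h
        rw [(h0 y hy).2, abs_zero]
        have : 0 ≤ (y - t) ^ 2 - (0 - 0 : ℝ) ^ 2 + 2 * a * (0 - 0) := by nlinarith [sq_nonneg (y - t)]
        positivity
      all_goals
        refine (hb x ⟨hx1, hx2⟩ y hy).trans ?_
        rw [show M ≤ _ ↔ M / a ^ 2 * a ^ 2 ≤ _ by rw [← hMe]]
        gcongr
        subst h
        nlinarith [mul_nonneg (sub_nonneg.2 hx1) (neg_nonneg.2 hx2), mul_nonneg (neg_nonneg.2 hx2) (neg_nonneg.2 ha.le)])
  intro x hx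
  have hA := A x hx t ht
  have hB := B x hx t ht
  obtain ⟨hx1, hx2⟩ := hx
  simp only at hA hB
  have hna : 0 < -a := by linarith
  have hpi := Real.pi_pos
  rcases le_total (x - a) (-a / 2) with hh | hh
  · have h1 := Real.mul_le_sin (x := π / (-a) * (x - a))
      (mul_nonneg (by positivity) (by linarith)) (by
        rw [div_mul_eq_mul_div, div_le_iff₀ hna]; nlinarith)
    have h2 : 2 / π * (π / (-a) * (x - a)) = (-2 * a * (x - a)) / a ^ 2 := by
      field_simp
    rw [h2] at h1
    calc |ψ (x, t)| ≤ _ := hA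
      _ ≤ M / a ^ 2 * (-2 * a * (x - a)) := by
        gcongr
        nlinarith [sq_nonneg (x - a)]
      _ = M * ((-2 * a * (x - a)) / a ^ 2) := by ring
      _ ≤ _ := by gcongr
  · have hxe : π - π / (-a) * (x - a) = π / (-a) * (-x) := by field_simp; ring
    have h1 := Real.mul_le_sin (x := π / (-a) * (-x))
      (mul_nonneg (by positivity) (by linarith)) (by
        rw [div_mul_eq_mul_div, div_le_iff₀ hna]; nlinarith)
    rw [← hxe, Real.sin_pi_sub, hxe] at h1
    have h2 : 2 / π * (π / (-a) * (-x)) = (2 * a * x) / a ^ 2 := by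
      field_simp
    rw [h2] at h1
    calc |ψ (x, t)| ≤ _ := hB
      _ ≤ M / a ^ 2 * (2 * a * x) := by
        gcongr
        nlinarith [sq_nonneg x]
      _ = M * ((2 * a * x) / a ^ 2) := by ring
      _ ≤ _ := by gcongr

/-- On the rectangle `R = (a,0) × (θ₀, 2π-θ₀)` (`a < 0`, `0 < θ₀ < π`), a harmonic function
vanishing on the two vertical sides, even about `θ = π`, and bounded by `M`, satisfies
`|ψ(r,θ)| ≤ C e^{-(π/|a|)(2π-θ₀-θ)}` for `θ ≥ π`, with `C` depending only on `M`. -/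
theorem stmt14 (M : ℝ) (hM : 0 < M) :
    ∃ C > 0, ∀ (a θ₀ : ℝ) (ψ : ℝ × ℝ → ℝ), a < 0 → 0 < θ₀ → θ₀ < π →
      HarmonicOn ψ (Set.Ioo a 0 ×ˢ Set.Ioo θ₀ (2 * π - θ₀)) →
      ContinuousOn ψ (closure (Set.Ioo a 0 ×ˢ Set.Ioo θ₀ (2 * π - θ₀))) →
      (∀ θ ∈ Set.Icc θ₀ (2 * π - θ₀), ψ (a, θ) = 0 ∧ ψ (0, θ) = 0) →
      (∀ p ∈ closure (Set.Ioo a 0 ×ˢ Set.Ioo θ₀ (2 * π - θ₀)), ψ (p.1, 2 * π - p.2) = ψ p) →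
      (∀ p ∈ Set.Ioo a 0 ×ˢ Set.Ioo θ₀ (2 * π - θ₀), |ψ p| ≤ M) →
      ∀ p ∈ Set.Ioo a 0 ×ˢ Set.Ioo θ₀ (2 * π - θ₀), π ≤ p.2 →
        |ψ p| ≤ C * Real.exp (-(π / |a|) * (2 * π - θ₀ - p.2)) := by
  refine ⟨2 * M * Real.exp (2 * π), by positivity, ?_⟩
  rintro a θ₀ ψ ha h0 hπ hharm hcont hside heven hbd ⟨r, θ⟩ hp hθ
  have hpi := Real.pi_pos
  have hna : 0 < -a := by linarith
  have hane : a ≠ 0 := ha.ne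
  rw [abs_of_neg ha]
  simp only at hθ ⊢
  have hcl : closure (Set.Ioo a 0 ×ˢ Set.Ioo θ₀ (2 * π - θ₀)) =
      Set.Icc a 0 ×ˢ Set.Icc θ₀ (2 * π - θ₀) := by
    rw [closure_prod_eq, closure_Ioo ha.ne, closure_Ioo (by linarith)]
  rw [hcl] at hcont heven
  have hs := sharm_of_harmonicOn hharm
  rcases le_or_gt (2 * π - θ₀ - θ) (2 * (-a)) with hd | hd
  · refine (hbd _ hp).trans ?_
    rw [mul_assoc, ← Real.exp_add]
    have : 0 ≤ 2 * π + -(π / -a) * (2 * π - θ₀ - θ) := by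
      have h1 : π / -a * (2 * π - θ₀ - θ) ≤ π / -a * (2 * (-a)) := by gcongr
      have h2 : π / -a * (2 * (-a)) = 2 * π := by field_simp
      linarith
    have := Real.one_le_exp this
    nlinarith
  · obtain ⟨hr, hθ'⟩ := hp
    simp only at hr hθ'
    obtain ⟨t, htdef⟩ : ∃ t, t = 2 * π - θ₀ + 2 * a := ⟨_, rfl⟩
    have ht1 : θ < t := by linarith
    have hbd' : ∀ x ∈ Set.Icc a 0, ∀ y ∈ Set.Ioo θ₀ (2 * π - θ₀), |ψ (x, y)| ≤ M := by
      intro x hx y hy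
      by_cases h1 : x = a
      · rw [h1, (hside y ⟨hy.1.le, hy.2.le⟩).1]; simpa using hM.le
      by_cases h2 : x = 0
      · rw [h2, (hside y ⟨hy.1.le, hy.2.le⟩).2]; simpa using hM.le
      exact hbd (x, y) ⟨⟨lt_of_le_of_ne hx.1 (Ne.symm h1), lt_of_le_of_ne hx.2 h2⟩, hy⟩
    have S1 := step1 (t := t) hM ha (hs.mono (by linarith) (by linarith))
      (hcont.mono (Set.prod_mono le_rfl (Set.Icc_subset_Icc (by linarith) (by linarith))))
      (fun y hy => hside y ⟨by linarith [hy.1], by linarith [hy.2]⟩)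
      (fun x hx y hy => hbd' x hx y ⟨by linarith [hy.1], by linarith [hy.2]⟩)
    have S2 : ∀ x ∈ Set.Icc a 0, |ψ (x, 2 * π - t)| ≤ M * Real.sin (π / (-a) * (x - a)) := by
      intro x hx
      have := heven (x, t) ⟨hx, by constructor <;> simp only <;> linarith⟩
      simp only at this
      rw [this]
      exact S1 x hx
    have hch : 0 < Real.cosh (π / (-a) * (t - π)) := Real.cosh_pos _
    have F := compare (hs.mono (c' := 2 * π - t) (d' := t) (by linarith) (by linarith))
      (sharm_trig (M / Real.cosh (π / (-a) * (t - π))) (π / (-a)) a π a 0 (2 * π - t) t)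
      (hcont.mono (Set.prod_mono le_rfl (Set.Icc_subset_Icc (by linarith) (by linarith))))
      (by fun_prop)
      (by
        intro x hx y hy h
        simp only
        rcases h with h | h | h | h
        · rw [h, (hside y ⟨by linarith [hy.1], by linarith [hy.2]⟩).1]; simp
        · rw [h, (hside y ⟨by linarith [hy.1], by linarith [hy.2]⟩).2]
          have : π / (-a) * (0 - a) = π := by field_simp; ring
          rw [this]; simp
        · rw [h]
          refine (S2 x hx).trans (le_of_eq ?_)
          rw [show π / (-a) * (2 * π - t - π) = -(π / (-a) * (t - π)) by ring, Real.cosh_neg]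
          field_simp
        · rw [h]
          refine (S1 x hx).trans (le_of_eq ?_)
          field_simp)
    have G := F r ⟨hr.1.le, hr.2.le⟩ θ ⟨by linarith, ht1.le⟩
    simp only at G
    refine G.trans ?_
    have hu : 0 ≤ π / (-a) * (θ - π) := mul_nonneg (by positivity) (by linarith)
    have c1 : Real.cosh (π / (-a) * (θ - π)) ≤ Real.exp (π / (-a) * (θ - π)) := by
      rw [Real.cosh_eq]
      have := Real.exp_le_exp.2 (show -(π / (-a) * (θ - π)) ≤ π / (-a) * (θ - π) by linarith)
      linarith
    have c2 : Real.exp (π / (-a) * (t - π)) ≤ 2 * Real.cosh (π / (-a) * (t - π)) := by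
      rw [Real.cosh_eq]
      have := Real.exp_pos (-(π / (-a) * (t - π)))
      linarith
    have e : Real.exp (2 * π) * Real.exp (-(π / -a) * (2 * π - θ₀ - θ)) *
        Real.exp (π / (-a) * (t - π)) = Real.exp (π / (-a) * (θ - π)) := by
      rw [← Real.exp_add, ← Real.exp_add]
      congr 1
      rw [htdef]
      field_simp
      ring
    have hsin : Real.sin (π / (-a) * (r - a)) * Real.cosh (π / (-a) * (θ - π)) ≤
        Real.cosh (π / (-a) * (θ - π)) := by
      have := Real.sin_le_one (π / (-a) * (r - a))
      have := Real.cosh_pos (π / (-a) * (θ - π))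
      nlinarith
    rw [div_mul_eq_mul_div, div_le_iff₀ hch]
    set E := Real.exp (2 * π) * Real.exp (-(π / -a) * (2 * π - θ₀ - θ)) with hE
    have hEpos : 0 < E := by positivity
    calc M * (Real.sin (π / (-a) * (r - a)) * Real.cosh (π / (-a) * (θ - π)))
        ≤ M * Real.exp (π / (-a) * (θ - π)) := by
          gcongr
          exact hsin.trans c1
      _ = M * (E * Real.exp (π / (-a) * (t - π))) := by rw [e]
      _ ≤ M * (E * (2 * Real.cosh (π / (-a) * (t - π)))) := by gcongr
      _ = _ := by rw [hE]; ring
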